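/- Let v be a norm on ℝ^n invariant under coordinate permutations with dual norm v*, and let f : P_n → ℝ be a differentiable function that is geodesically convex (t ↦ f(X^{1/2} e^{tS} X^{1/2}) is convex for every X ∈ P_n and Hermitian S). Then for every X ∈ P_n and every Hermitian H with ‖X^{-1/2} H X^{-1/2}‖_v ≤ 1, one has ‖X^{1/2} ∇f(X) X^{1/2}‖_{v*} ≥ −lim_{t→∞} (f(X^{1/2} e^{t X^{-1/2} H X^{-1/2}} X^{1/2}) − f(X))/t, where ∇f(X) is the Hermitian matrix representing the differential of f at X via the trace pairing (weak duality: the minimum dual gradient norm is at least the supremum of the negative recession function over the unit ball). -/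

import Mathlib

noncomputable section
open scoped Classical
open Matrix Filter
open scoped ComplexOrder Topology

/-- `v(λ(H))` for Hermitian `H` (junk value `0` otherwise). -/
def vnorm {n : ℕ} (v : (Fin n → ℝ) → ℝ) (H : Matrix (Fin n) (Fin n) ℂ) : ℝ :=
  if h : H.IsHermitian then v h.eigenvalues else 0

/-- The positive semidefinite square root (junk value `0` off PSD matrices). -/
def matSqrt {n : ℕ} (X : Matrix (Fin n) (Fin n) ℂ) : Matrix (Fin n) (Fin n) ℂ :=
  if h : X.PosSemidef then
    h.1.eigenvectorUnitary.1 * diagonal ((↑) ∘ Real.sqrt ∘ h.1.eigenvalues) *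
      (star h.1.eigenvectorUnitary : Matrix (Fin n) (Fin n) ℂ)
  else 0

/-- Complex diagonal matrix of a real vector. -/
def cd {n : ℕ} (x : Fin n → ℝ) : Matrix (Fin n) (Fin n) ℂ := diagonal (fun i => (x i : ℂ))

lemma cd_mul {n : ℕ} (x y : Fin n → ℝ) : cd x * cd y = cd (fun i => x i * y i) := by
  simp [cd, diagonal_mul_diagonal]

lemma cd_herm {n : ℕ} (x : Fin n → ℝ) : (cd x)ᴴ = cd x := by
  rw [cd, diagonal_conjTranspose]
  congr 1
  ext i
  simp

lemma cd_smul {n : ℕ} (t : ℝ) (x : Fin n → ℝ) : t • cd x = cd (t • x) := by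
  ext i j
  by_cases h : i = j <;> simp [cd, diagonal, h]

lemma cd_one {n : ℕ} : cd (fun _ : Fin n => (1 : ℝ)) = 1 := by
  simp [cd]

lemma cd_add {n : ℕ} (x y : Fin n → ℝ) : cd x + cd y = cd (fun i => x i + y i) := by
  simp [cd, diagonal_add]

lemma cd_exp {n : ℕ} (x : Fin n → ℝ) :
    NormedSpace.exp (cd x) = cd (fun i => Real.exp (x i)) := by
  rw [cd, cd, Matrix.exp_diagonal]
  congr 1
  ext i
  rw [Pi.coe_exp, ← Complex.exp_eq_exp_ℂ, Complex.ofReal_exp]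

lemma exp_unit {n : ℕ} (U : Matrix (Fin n) (Fin n) ℂ) (hU : U * Uᴴ = 1) (x : Fin n → ℝ) :
    NormedSpace.exp (U * cd x * Uᴴ) = U * cd (fun i => Real.exp (x i)) * Uᴴ := by
  have h1 : U⁻¹ = Uᴴ := Matrix.inv_eq_right_inv hU
  have h2 : IsUnit U := by
    rw [Matrix.isUnit_iff_isUnit_det]
    exact Matrix.isUnit_det_of_right_inverse hU
  rw [← h1, Matrix.exp_conj _ _ h2, cd_exp]

lemma spec_herm {n : ℕ} {A : Matrix (Fin n) (Fin n) ℂ} (h : A.IsHermitian) :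
    ∃ U : Matrix (Fin n) (Fin n) ℂ, Uᴴ * U = 1 ∧ U * Uᴴ = 1 ∧ A = U * cd h.eigenvalues * Uᴴ := by
  refine ⟨h.eigenvectorUnitary.1, ?_, ?_, ?_⟩
  · exact Unitary.coe_star_mul_self h.eigenvectorUnitary
  · exact Unitary.coe_mul_star_self h.eigenvectorUnitary
  · have := h.spectral_theorem
    rw [Unitary.conjStarAlgAut_apply] at this
    exact this

lemma matSqrt_spec {n : ℕ} {X : Matrix (Fin n) (Fin n) ℂ} (hX : X.PosDef) :
    (matSqrt X)ᴴ = matSqrt X ∧ matSqrt X * matSqrt X = X ∧ IsUnit (matSqrt X).det := by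
  have hP := hX.posSemidef
  set U : Matrix (Fin n) (Fin n) ℂ := hP.1.eigenvectorUnitary.1 with hU
  have h1 : Uᴴ * U = 1 := Unitary.coe_star_mul_self hP.1.eigenvectorUnitary
  have h3 : X = U * cd hP.1.eigenvalues * Uᴴ := by
    have := hP.1.spectral_theorem
    rw [Unitary.conjStarAlgAut_apply] at this
    exact this
  have h4 : matSqrt X = U * cd (fun i => Real.sqrt (hP.1.eigenvalues i)) * Uᴴ := by
    rw [matSqrt, dif_pos hP]
    rfl
  have h5 : matSqrt X * matSqrt X = X := by
    calc matSqrt X * matSqrt X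
        = U * (cd (fun i => Real.sqrt (hP.1.eigenvalues i)) * (Uᴴ * U) *
            cd (fun i => Real.sqrt (hP.1.eigenvalues i))) * Uᴴ := by
          rw [h4]; simp only [mul_assoc]
      _ = U * cd hP.1.eigenvalues * Uᴴ := by
          rw [h1, mul_one, cd_mul]
          congr 3
          ext i
          exact Real.mul_self_sqrt (hP.eigenvalues_nonneg i)
      _ = X := h3.symm
  refine ⟨?_, h5, ?_⟩
  · rw [h4]
    simp [conjTranspose_mul, cd_herm, mul_assoc]
  · have h6 : IsUnit (matSqrt X * matSqrt X).det := by
      rw [h5]; exact (Matrix.isUnit_iff_isUnit_det _).mp hX.isUnit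
    rw [det_mul] at h6
    exact isUnit_of_mul_isUnit_left h6

lemma gconv {n : ℕ} (f : Matrix (Fin n) (Fin n) ℂ → ℝ)
    (hconv : ∀ X : Matrix (Fin n) (Fin n) ℂ, X.PosDef →
      ∀ S : Matrix (Fin n) (Fin n) ℂ, S.IsHermitian →
        ConvexOn ℝ Set.univ (fun t : ℝ => f (matSqrt X * NormedSpace.exp (t • S) * matSqrt X)))
    (P : Matrix (Fin n) (Fin n) ℂ) (hP : IsUnit P.det) :
    ConvexOn ℝ Set.univ (fun x : Fin n → ℝ => f (P * cd (fun i => Real.exp (x i)) * Pᴴ)) := by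
  have line : ∀ x y : Fin n → ℝ, ConvexOn ℝ Set.univ
      (fun t : ℝ => f (P * cd (fun i => Real.exp (x i + t * y i)) * Pᴴ)) := by
    intro x y
    set D : Matrix (Fin n) (Fin n) ℂ := cd (fun i => Real.exp (x i / 2)) with hD
    have hDu : D * cd (fun i => Real.exp (-(x i / 2))) = 1 := by
      rw [hD, cd_mul, ← cd_one]
      congr 1
      ext i
      rw [← Real.exp_add]; simp
    set T := P * D with hT
    have hDdet : IsUnit D.det := Matrix.isUnit_det_of_right_inverse hDu
    have hTdet : IsUnit T.det := by
      rw [hT, det_mul]; exact hP.mul hDdet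
    have hZ : (T * Tᴴ).PosDef := by
      refine Matrix.PosDef.mul_conjTranspose_self T ?_
      exact Matrix.vecMul_injective_iff_isUnit.mpr ((Matrix.isUnit_iff_isUnit_det _).mpr hTdet)
    obtain ⟨hR1, hR2, hR3⟩ := matSqrt_spec hZ
    set R := matSqrt (T * Tᴴ) with hR
    have hRinv : (R⁻¹)ᴴ = R⁻¹ := by rw [Matrix.conjTranspose_nonsing_inv, hR1]
    have hRR : R * R⁻¹ = 1 := Matrix.mul_nonsing_inv _ hR3
    have hRR' : R⁻¹ * R = 1 := Matrix.nonsing_inv_mul _ hR3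
    set V := R⁻¹ * T with hV
    have hVh : Vᴴ = Tᴴ * R⁻¹ := by rw [hV, conjTranspose_mul, hRinv]
    have hRV : R * V = T := by rw [hV, ← mul_assoc, hRR, one_mul]
    have hVR : Vᴴ * R = Tᴴ := by rw [hVh, mul_assoc, hRR', mul_one]
    have hVV : V * Vᴴ = 1 := by
      calc V * Vᴴ = R⁻¹ * (T * Tᴴ) * R⁻¹ := by rw [hVh, hV]; simp only [mul_assoc]
        _ = (R⁻¹ * R) * (R * R⁻¹) := by rw [← hR2]; simp only [mul_assoc]
        _ = 1 := by rw [hRR, hRR', one_mul]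
    have hS : (V * cd y * Vᴴ).IsHermitian := by
      simp [Matrix.IsHermitian, conjTranspose_mul, cd_herm, mul_assoc]
    have key := hconv _ hZ _ hS
    convert key using 3 with t
    rw [← hR]
    have e1 : t • (V * cd y * Vᴴ) = V * cd (t • y) * Vᴴ := by
      rw [← cd_smul]; simp
    rw [e1, exp_unit V hVV]
    calc P * cd (fun i => Real.exp (x i + t * y i)) * Pᴴ
        = P * (D * cd (fun i => Real.exp ((t • y) i)) * D) * Pᴴ := by
          rw [hD, cd_mul, cd_mul]
          congr 3
          ext i
          rw [← Real.exp_add, ← Real.exp_add]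
          congr 1
          simp; ring
      _ = T * cd (fun i => Real.exp ((t • y) i)) * Tᴴ := by
          rw [hT, conjTranspose_mul, hD, cd_herm]; simp only [mul_assoc]
      _ = R * (V * cd (fun i => Real.exp ((t • y) i)) * Vᴴ) * R := by
          rw [← hVR]
          conv_lhs => rw [← hRV]
          simp only [mul_assoc]
  refine ⟨convex_univ, ?_⟩
  intro x _ y _ a b ha hb hab
  have := (line x (y - x)).2 (Set.mem_univ 0) (Set.mem_univ 1) ha hb hab
  have hx : a • x + b • y = fun i => x i + (a • (0:ℝ) + b • 1) * (y - x) i := by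
    ext i
    have : a = 1 - b := by linarith
    subst this
    simp; ring
  simp only [hx]
  simpa using this

lemma deriv_compare {n : ℕ} (g : (Fin n → ℝ) → ℝ) (hg : ConvexOn ℝ Set.univ g) (l : Fin n → ℝ)
    (d : ℝ) (h : ℝ → ℝ) (hh : ∀ᶠ t in 𝓝 (0:ℝ), h t = g (fun i => Real.log (1 + t * l i)))
    (hd : HasDerivAt h d 0) : HasDerivAt (fun t : ℝ => g (t • l)) d 0 := by
  have hL := hg.locallyLipschitzOn isOpen_univ
  obtain ⟨K, s, hs, hK⟩ := hL (Set.mem_univ (0 : Fin n → ℝ))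
  rw [nhdsWithin_univ] at hs
  -- the two curves
  have hc1 : HasDerivAt (fun t : ℝ => t • l) l 0 := by
    simpa using (hasDerivAt_id (0:ℝ)).smul_const l
  have hc2 : HasDerivAt (fun t : ℝ => (fun i => Real.log (1 + t * l i) : Fin n → ℝ)) l 0 := by
    rw [hasDerivAt_pi]
    intro i
    have h1 : HasDerivAt (fun t : ℝ => 1 + t * l i) (l i) 0 := by
      simpa using ((hasDerivAt_id (0:ℝ)).mul_const (l i)).const_add 1
    simpa using h1.log (by simp)
  have hdiff : HasDerivAt (fun t : ℝ => t • l - (fun i => Real.log (1 + t * l i) : Fin n → ℝ)) 0 0 := by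
    have := hc1.sub hc2
    rw [sub_self] at this
    exact this
  have hgo : HasDerivAt (fun t : ℝ => g (t • l) - h t) 0 0 := by
    rw [hasDerivAt_iff_isLittleO]
    have h0 : g ((0:ℝ) • l) - h 0 = 0 := by
      rw [hh.self_of_nhds]; simp; 
      simp [Pi.zero_def]
    have hO : (fun t : ℝ => g (t • l) - h t) =O[𝓝 0]
        (fun t : ℝ => t • l - (fun i => Real.log (1 + t * l i) : Fin n → ℝ)) := by
      refine Asymptotics.IsBigO.of_bound K ?_
      have m1 : ∀ᶠ t in 𝓝 (0:ℝ), t • l ∈ s := hc1.continuousAt (by simpa using hs)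
      have m2 : ∀ᶠ t in 𝓝 (0:ℝ), (fun i => Real.log (1 + t * l i) : Fin n → ℝ) ∈ s :=
        hc2.continuousAt (by simpa [Pi.zero_def] using hs)
      filter_upwards [hh, m1, m2] with t e a b
      rw [e]
      simpa [dist_eq_norm] using hK.dist_le_mul _ a _ b
    have ho' : (fun t : ℝ => t • l - (fun i => Real.log (1 + t * l i) : Fin n → ℝ)) =o[𝓝 0]
        (fun t : ℝ => t) := by
      rw [hasDerivAt_iff_isLittleO] at hdiff
      refine hdiff.congr (fun t => ?_) (fun t => by simp)
      ext i
      simp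
    have := hO.trans_isLittleO ho'
    refine this.congr (fun t => ?_) (fun t => by simp)
    rw [h0]
    simp
  have := hgo.add hd
  rw [zero_add] at this
  refine this.congr_of_eventuallyEq (Filter.Eventually.of_forall fun t => ?_)
  simp

lemma slope_le {φ : ℝ → ℝ} (hφ : ConvexOn ℝ Set.univ φ) {d L : ℝ} (hd : HasDerivAt φ d 0)
    (hL : Tendsto (fun t => (φ t - φ 0) / t) atTop (𝓝 L)) : d ≤ L := by
  have h1 : ∀ t : ℝ, 0 < t → (φ t - φ 0) / t ≤ L := by
    intro t ht
    refine ge_of_tendsto hL ?_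
    filter_upwards [eventually_ge_atTop t] with u hu
    simpa using hφ.secant_mono (Set.mem_univ 0) (Set.mem_univ t) (Set.mem_univ u) ht.ne'
      (ht.trans_le hu).ne' hu
  have h2 := hd.tendsto_slope_zero_right
  refine le_of_tendsto h2 ?_
  filter_upwards [self_mem_nhdsWithin] with t ht
  have := h1 t ht
  simpa [div_eq_inv_mul] using this

lemma v_sum {n : ℕ} (v : (Fin n → ℝ) → ℝ) (hv0 : v 0 = 0)
    (hv_add : ∀ x y, v (x + y) ≤ v x + v y) {ι : Type*} (s : Finset ι) (x : ι → Fin n → ℝ) :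
    v (∑ i ∈ s, x i) ≤ ∑ i ∈ s, v (x i) := by
  induction s using Finset.induction_on with
  | empty => simp [hv0]
  | insert a s ha ih =>
    rw [Finset.sum_insert ha, Finset.sum_insert ha]
    exact (hv_add _ _).trans (by gcongr)

lemma v_ds {n : ℕ} (v : (Fin n → ℝ) → ℝ) (hv0 : v 0 = 0)
    (hv_smul : ∀ (c : ℝ) (x : Fin n → ℝ), v (c • x) = |c| * v x)
    (hv_add : ∀ x y, v (x + y) ≤ v x + v y)
    (hv_perm : ∀ (σ : Equiv.Perm (Fin n)) (x : Fin n → ℝ), v (x ∘ σ) = v x)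
    (D : Matrix (Fin n) (Fin n) ℝ) (hD : D ∈ doublyStochastic ℝ (Fin n)) (x : Fin n → ℝ) :
    v (D *ᵥ x) ≤ v x := by
  obtain ⟨w, hw0, hw1, hw⟩ := exists_eq_sum_perm_of_mem_doublyStochastic hD
  rw [← hw, Matrix.sum_mulVec]
  refine (v_sum v hv0 hv_add _ _).trans ?_
  have : ∀ σ : Equiv.Perm (Fin n), v ((w σ • σ.permMatrix ℝ) *ᵥ x) = w σ * v x := by
    intro σ
    rw [Matrix.smul_mulVec, hv_smul, Matrix.permMatrix_mulVec, hv_perm, abs_of_nonneg (hw0 σ)]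
  simp only [this]
  rw [← Finset.sum_mul, hw1, one_mul]

lemma unit_ds {n : ℕ} (W : Matrix (Fin n) (Fin n) ℂ) (h1 : W * Wᴴ = 1) (h2 : Wᴴ * W = 1) :
    (Matrix.of fun i j => Complex.normSq (W i j)) ∈ doublyStochastic ℝ (Fin n) := by
  rw [mem_doublyStochastic_iff_sum]
  refine ⟨fun i j => Complex.normSq_nonneg _, fun i => ?_, fun j => ?_⟩
  · have := congrFun (congrFun h1 i) i
    simp only [Matrix.mul_apply, conjTranspose_apply, one_apply_eq] at this
    have h := congrArg Complex.re this
    simpa [Complex.normSq_apply] using h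
  · have := congrFun (congrFun h2 j) j
    simp only [Matrix.mul_apply, conjTranspose_apply, one_apply_eq] at this
    have h := congrArg Complex.re this
    simpa [Complex.normSq_apply] using h

lemma trace_diag {n : ℕ} (W : Matrix (Fin n) (Fin n) ℂ) (a b : Fin n → ℝ) :
    (Matrix.trace (cd a * (W * cd b * Wᴴ))).re
      = ∑ i, a i * ((Matrix.of fun i j => Complex.normSq (W i j)) *ᵥ b) i := by
  simp only [Matrix.trace, cd, diag_apply, diagonal_mul, Complex.re_sum]
  refine Finset.sum_congr rfl fun i _ => ?_
  rw [Complex.re_ofReal_mul, Matrix.mul_apply, Complex.re_sum]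
  congr 1
  simp only [mulVec, dotProduct, of_apply, mul_diagonal, conjTranspose_apply]
  refine Finset.sum_congr rfl fun j _ => ?_
  simp [Complex.normSq_apply]
  ring

lemma trace_ineq {n : ℕ} (v vs : (Fin n → ℝ) → ℝ)
    (hv0 : v 0 = 0)
    (hv_smul : ∀ (c : ℝ) (x : Fin n → ℝ), v (c • x) = |c| * v x)
    (hv_add : ∀ x y, v (x + y) ≤ v x + v y)
    (hv_perm : ∀ (σ : Equiv.Perm (Fin n)) (x : Fin n → ℝ), v (x ∘ σ) = v x)
    (hvs : ∀ x, IsGreatest {r : ℝ | ∃ y : Fin n → ℝ, v y ≤ 1 ∧ r = ∑ i, x i * y i} (vs x))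
    {M S : Matrix (Fin n) (Fin n) ℂ} (hM : M.IsHermitian) (hS : S.IsHermitian)
    (hb : v hS.eigenvalues ≤ 1) : -(Matrix.trace (M * S)).re ≤ vs hM.eigenvalues := by
  obtain ⟨U, hU1, hU2, hU⟩ := spec_herm hM
  obtain ⟨V, hV1, hV2, hV⟩ := spec_herm hS
  set a := hM.eigenvalues
  set b := hS.eigenvalues
  set W := Uᴴ * V with hW
  have hWh : Wᴴ = Vᴴ * U := by rw [hW, conjTranspose_mul, conjTranspose_conjTranspose]
  have w1 : W * Wᴴ = 1 := by
    rw [hWh, hW, mul_assoc, ← mul_assoc V, hV2, one_mul, hU1]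
  have w2 : Wᴴ * W = 1 := by
    rw [hWh, hW, mul_assoc, ← mul_assoc U, hU2, one_mul, hV1]
  have htr : Matrix.trace (M * S) = Matrix.trace (cd a * (W * cd b * Wᴴ)) := by
    rw [hU, hV, hWh, hW, mul_assoc U, mul_assoc U, Matrix.trace_mul_comm U]
    simp only [mul_assoc]
  rw [htr, trace_diag]
  refine (hvs a).2 ⟨(-1 : ℝ) • ((Matrix.of fun i j => Complex.normSq (W i j)) *ᵥ b), ?_, ?_⟩
  · rw [hv_smul]
    simpa using (v_ds v hv0 hv_smul hv_add hv_perm _ (unit_ds W w1 w2) b).trans hb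
  · simp

/-- Weak duality: for every `X ∈ P_n` and Hermitian `H` with `‖X^{-1/2} H X^{-1/2}‖_v ≤ 1`,
the dual gradient norm `‖X^{1/2} ∇f(X) X^{1/2}‖_{v*}` is at least the negative of the
recession value of `f` along the geodesic ray `t ↦ X^{1/2} e^{t X^{-1/2} H X^{-1/2}} X^{1/2}`. -/
theorem weak_duality_gradient_norm {n : ℕ} (v vs : (Fin n → ℝ) → ℝ)
    (hv_eq0 : ∀ x, v x = 0 ↔ x = 0)
    (hv_smul : ∀ (c : ℝ) (x : Fin n → ℝ), v (c • x) = |c| * v x)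
    (hv_add : ∀ x y, v (x + y) ≤ v x + v y)
    (hv_perm : ∀ (σ : Equiv.Perm (Fin n)) (x : Fin n → ℝ), v (x ∘ σ) = v x)
    (hvs : ∀ x, IsGreatest {r : ℝ | ∃ y : Fin n → ℝ, v y ≤ 1 ∧ r = ∑ i, x i * y i} (vs x))
    (f : Matrix (Fin n) (Fin n) ℂ → ℝ)
    (hconv : ∀ X : Matrix (Fin n) (Fin n) ℂ, X.PosDef →
      ∀ S : Matrix (Fin n) (Fin n) ℂ, S.IsHermitian →
        ConvexOn ℝ Set.univ (fun t : ℝ => f (matSqrt X * NormedSpace.exp (t • S) * matSqrt X)))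
    (Gf : Matrix (Fin n) (Fin n) ℂ → Matrix (Fin n) (Fin n) ℂ)
    (hGf_herm : ∀ X : Matrix (Fin n) (Fin n) ℂ, X.PosDef → (Gf X).IsHermitian)
    (hGf : ∀ X : Matrix (Fin n) (Fin n) ℂ, X.PosDef →
      ∀ H : Matrix (Fin n) (Fin n) ℂ, H.IsHermitian →
        HasDerivAt (fun t : ℝ => f (X + t • H)) ((Matrix.trace (Gf X * H)).re) 0)
    (X H : Matrix (Fin n) (Fin n) ℂ) (hX : X.PosDef) (hH : H.IsHermitian)
    (hHball : vnorm v ((matSqrt X)⁻¹ * H * (matSqrt X)⁻¹) ≤ 1)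
    (L : ℝ)
    (hL : Tendsto
      (fun t : ℝ =>
        (f (matSqrt X * NormedSpace.exp (t • ((matSqrt X)⁻¹ * H * (matSqrt X)⁻¹)) * matSqrt X)
          - f X) / t)
      atTop (𝓝 L)) :
    -L ≤ vnorm vs (matSqrt X * Gf X * matSqrt X) := by
  obtain ⟨hQ1, hQ2, hQ3⟩ := matSqrt_spec hX
  set Q := matSqrt X with hQ
  have hQinv : (Q⁻¹)ᴴ = Q⁻¹ := by rw [Matrix.conjTranspose_nonsing_inv, hQ1]
  have hQQ : Q * Q⁻¹ = 1 := Matrix.mul_nonsing_inv _ hQ3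
  have hQQ' : Q⁻¹ * Q = 1 := Matrix.nonsing_inv_mul _ hQ3
  have hS : (Q⁻¹ * H * Q⁻¹).IsHermitian := by
    simp [Matrix.IsHermitian, conjTranspose_mul, hQinv, hH.eq, mul_assoc]
  have hM : (Q * Gf X * Q).IsHermitian := by
    simp [Matrix.IsHermitian, conjTranspose_mul, hQ1, (hGf_herm X hX).eq, mul_assoc]
  set S := Q⁻¹ * H * Q⁻¹ with hSdef
  have hHS : H = Q * S * Q := by
    calc H = (Q * Q⁻¹) * H * (Q⁻¹ * Q) := by rw [hQQ, hQQ', one_mul, mul_one]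
      _ = Q * S * Q := by rw [hSdef]; simp only [mul_assoc]
  rw [vnorm, dif_pos hS] at hHball
  rw [vnorm, dif_pos hM]
  have htr := trace_ineq v vs ((hv_eq0 0).2 rfl) hv_smul hv_add hv_perm hvs hM hS hHball
  refine le_trans ?_ htr
  have htr2 : Matrix.trace (Q * Gf X * Q * S) = Matrix.trace (Gf X * H) := by
    rw [hHS, mul_assoc Q, mul_assoc Q, Matrix.trace_mul_comm Q]
    simp only [mul_assoc]
  rw [htr2]
  have hconvφ := hconv X hX S hS
  rw [← hQ] at hconvφ
  obtain ⟨U, hU1, hU2, hU⟩ := spec_herm hS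
  set l := hS.eigenvalues with hl
  set P := Q * U with hP
  have hPh : Pᴴ = Uᴴ * Q := by rw [hP, conjTranspose_mul, hQ1]
  have hPdet : IsUnit P.det := by
    rw [hP, det_mul]
    exact hQ3.mul (Matrix.isUnit_det_of_right_inverse hU2)
  have hφ : ∀ t : ℝ, f (Q * NormedSpace.exp (t • S) * Q)
      = f (P * cd (fun i => Real.exp ((t • l) i)) * Pᴴ) := by
    intro t
    have e1 : t • S = U * cd (t • l) * Uᴴ := by
      rw [← cd_smul, hU]; simp
    rw [e1, exp_unit U hU2, hPh, hP]
    simp only [mul_assoc]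
  have hXP : X = P * Pᴴ := by
    rw [hPh, hP, mul_assoc, ← mul_assoc U, hU2, one_mul, hQ2]
  have hHP : H = P * cd l * Pᴴ := by
    rw [hHS, hPh, hP]
    conv_lhs => rw [hU]
    simp only [mul_assoc]
  have hline : ∀ t : ℝ, X + t • H = P * cd (fun i => 1 + t * l i) * Pᴴ := by
    intro t
    have : cd (fun i => 1 + t * l i) = 1 + t • cd l := by
      rw [cd_smul, ← cd_one, cd_add]; rfl
    rw [this, mul_add, add_mul, mul_one, ← hXP]
    simp [← hHP]
  have hev : ∀ᶠ t in 𝓝 (0:ℝ), f (X + t • H)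
      = f (P * cd (fun i => Real.exp (Real.log (1 + t * l i))) * Pᴴ) := by
    have hpos : ∀ᶠ t in 𝓝 (0:ℝ), ∀ i, 0 < 1 + t * l i := by
      rw [Filter.eventually_all]
      intro i
      have hc : ContinuousAt (fun t : ℝ => 1 + t * l i) 0 := by fun_prop
      exact hc.eventually (lt_mem_nhds (by simp))
    filter_upwards [hpos] with t ht
    rw [hline]
    congr 4
    ext i
    rw [Real.exp_log (ht i)]
  have hder := deriv_compare _ (gconv f hconv P hPdet) l _ _ hev (hGf X hX H hH)
  simp only [← hφ] at hder
  have h0 : f (Q * NormedSpace.exp ((0:ℝ) • S) * Q) = f X := by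
    rw [zero_smul, NormedSpace.exp_zero, mul_one, hQ2]
  have := slope_le hconvφ hder (L := L) (by simpa only [h0] using hL)
  linarith
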